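/- Let q ∈ L¹[0,1] be a real-valued integrable function and let t ∈ [0,2π) be fixed. Suppose that every eigenvalue λ of the quasi-periodic problem L_t(q) satisfies λ ≥ min{t², (2π−t)²}, and that there is a function m : ℕ → ℝ such that for every n ∈ ℕ (n ≥ 1), m(n) equals either 2nπ − t or 2nπ + t and m(n)² is an eigenvalue of L_t(q). Then q = 0 almost everywhere on [0,1]. -/

import Mathlib

open MeasureTheory Set

/-- `IsQPEigenpair q t lam y g h` says that `y` (with first derivative `g` and
second derivative `h`) is an eigenfunction of the quasi-periodic problem
`L_t(q)` on `[0,1]` with eigenvalue `lam`: `y` is nonzero, continuously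
differentiable on `[0,1]` with derivative `g`, `g` is absolutely continuous
with a.e. derivative `h` (encoded via the fundamental theorem of calculus with
`h` integrable), the equation `-y'' + q y = lam y` holds a.e. on `[0,1]`, and
the quasi-periodic boundary conditions hold. -/
def IsQPEigenpair (q : ℝ → ℝ) (t : ℝ) (lam : ℂ) (y g h : ℝ → ℂ) : Prop :=
  (∃ x ∈ Icc (0:ℝ) 1, y x ≠ 0) ∧
  (∀ x ∈ Icc (0:ℝ) 1, HasDerivWithinAt y (g x) (Icc (0:ℝ) 1) x) ∧
  ContinuousOn g (Icc (0:ℝ) 1) ∧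
  IntegrableOn h (Icc (0:ℝ) 1) ∧
  (∀ x ∈ Icc (0:ℝ) 1, g x = g 0 + ∫ s in (0:ℝ)..x, h s) ∧
  (∀ᵐ x ∂(volume.restrict (Icc (0:ℝ) 1)), -h x + (q x : ℂ) * y x = lam * y x) ∧
  y 1 = Complex.exp (Complex.I * t) * y 0 ∧
  g 1 = Complex.exp (Complex.I * t) * g 0

/-- `lam` is an eigenvalue of the quasi-periodic problem `L_t(q)`. -/
def IsQPEigenvalue (q : ℝ → ℝ) (t : ℝ) (lam : ℂ) : Prop :=
  ∃ y g h : ℝ → ℂ, IsQPEigenpair q t lam y g h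

/-! Write `e = exp (it)`. The set of `λ` for which the form of `-y'' + (q - λ) y` is nonnegative on
functions with multiplier `e` is closed and, by a Riccati substitution, contains all very negative
`λ`. If `λ` belongs to it and is not an eigenvalue, then testing the form with `y - ε z`, where
`-z'' + (q - λ) z = y`, shows that slightly larger values belong to it as well. Hence a lower bound
for the eigenvalues is a lower bound for the form.

An eigenfunction for a high eigenvalue `μ²` is, up to `O(1/μ)`, a combination of the waves
`exp (± iμx)`. Integrating the equation against the same two waves, the Riemann–Lebesgue lemma
forces `∫ q = 0` in the limit.

Choose `τ` with `exp (iτ) = e` and `τ² = min (t²) ((2π - t)²)`. The form of `-y'' + (q - τ²) y` is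
nonnegative and takes the value `∫ q = 0` at `exp (iτx)`, so its first variation there vanishes:
`∫ q u = 0` for every test function `u`. -/

section AbsolutelyContinuous

variable {E F : Type*} [NormedAddCommGroup E] [NormedSpace ℝ E] [NormedAddCommGroup F]
  [NormedSpace ℝ F] {f f' g g' : ℝ → E} {a b c : ℝ}

theorem intervalIntegrable_clm_comp (L : E →L[ℝ] F) (hf : IntervalIntegrable f volume a b) :
    IntervalIntegrable (fun x => L (f x)) volume a b :=
  ⟨L.integrable_comp hf.1, L.integrable_comp hf.2⟩

theorem absolutelyContinuousOnInterval_intervalIntegral (h : IntervalIntegrable f volume a b)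
    (hc : c ∈ uIcc a b) :
    AbsolutelyContinuousOnInterval (fun x => ∫ s in c..x, f s) a b := by
  have hnorm := h.norm.absolutelyContinuousOnInterval_intervalIntegral hc
  rw [absolutelyContinuousOnInterval_iff] at hnorm ⊢
  intro ε hε
  obtain ⟨δ, hδ, hsmall⟩ := hnorm ε hε
  refine ⟨δ, hδ, fun P hP hPδ => (Finset.sum_le_sum fun i hi => ?_).trans_lt (hsmall P hP hPδ)⟩
  have hl := h.mono_set (uIcc_subset_uIcc hc (hP.1 i hi).1)
  have hr := h.mono_set (uIcc_subset_uIcc hc (hP.1 i hi).2)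
  rw [dist_comm, dist_comm (∫ v in c..(P.2 i).1, ‖f v‖), dist_eq_norm, dist_eq_norm,
    intervalIntegral.integral_interval_sub_left hr hl,
    intervalIntegral.integral_interval_sub_left hr.norm hl.norm]
  exact intervalIntegral.norm_integral_le_abs_integral_norm

omit [NormedSpace ℝ E] in
theorem absolutelyContinuousOnInterval_congr (hf : AbsolutelyContinuousOnInterval f a b)
    (h : EqOn f g (uIcc a b)) : AbsolutelyContinuousOnInterval g a b := by
  rw [absolutelyContinuousOnInterval_iff] at hf ⊢
  refine fun ε hε => (hf ε hε).imp fun δ ⟨hδ, hsmall⟩ => ⟨hδ, fun P hP hPδ => ?_⟩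
  refine (Finset.sum_congr rfl fun i hi => ?_).trans_lt (hsmall P hP hPδ)
  rw [h (hP.1 i hi).1, h (hP.1 i hi).2]

/-- `f` is absolutely continuous on the interval between `a` and `b` with a.e. derivative `f'`,
encoded as: `f` is an indefinite integral of the integrable function `f'`. -/
structure HasIntegrableDeriv (f f' : ℝ → E) (a b : ℝ) : Prop where
  intervalIntegrable : IntervalIntegrable f' volume a b
  eq_add_integral : ∀ x ∈ uIcc a b, f x = f a + ∫ s in a..x, f' s

namespace HasIntegrableDeriv

theorem intervalIntegrable_of_mem (h : HasIntegrableDeriv f f' a b) {x : ℝ} (hx : x ∈ uIcc a b) :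
    IntervalIntegrable f' volume a x :=
  h.intervalIntegrable.mono_set (uIcc_subset_uIcc left_mem_uIcc hx)

theorem integral_eq_sub (h : HasIntegrableDeriv f f' a b) : ∫ s in a..b, f' s = f b - f a := by
  rw [h.eq_add_integral b right_mem_uIcc, add_sub_cancel_left]

theorem of_integral (hf : IntervalIntegrable f volume a b) :
    HasIntegrableDeriv (fun x => ∫ s in a..x, f s) f a b :=
  ⟨hf, fun x _ => by simp⟩

theorem const_add (C : E) (hf : HasIntegrableDeriv f f' a b) :
    HasIntegrableDeriv (fun x => C + f x) f' a b :=
  ⟨hf.intervalIntegrable, fun x hx => by rw [hf.eq_add_integral x hx, add_assoc]⟩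

theorem congr (h : HasIntegrableDeriv f f' a b) (hg : EqOn g f (uIcc a b))
    (hg' : ∀ᵐ x ∂volume.restrict (uIoc a b), g' x = f' x) : HasIntegrableDeriv g g' a b := by
  have hsub : ∀ x ∈ uIcc a b, g' =ᵐ[volume.restrict (uIoc a x)] f' := fun x hx =>
    ae_restrict_of_ae_restrict_of_subset
      (uIoc_subset_uIoc_of_uIcc_subset_uIcc (uIcc_subset_uIcc left_mem_uIcc hx)) hg'
  refine ⟨h.intervalIntegrable.congr_ae ((hsub b right_mem_uIcc).mono fun _ => Eq.symm),
    fun x hx => ?_⟩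
  rw [hg hx, hg left_mem_uIcc, h.eq_add_integral x hx,
    intervalIntegral.integral_congr_ae_restrict (hsub x hx)]

theorem add (hf : HasIntegrableDeriv f f' a b) (hg : HasIntegrableDeriv g g' a b) :
    HasIntegrableDeriv (fun x => f x + g x) (fun x => f' x + g' x) a b := by
  refine ⟨hf.intervalIntegrable.add hg.intervalIntegrable, fun x hx => ?_⟩
  rw [intervalIntegral.integral_add (hf.intervalIntegrable_of_mem hx)
    (hg.intervalIntegrable_of_mem hx), hf.eq_add_integral x hx, hg.eq_add_integral x hx]
  abel

theorem const_smul {𝕜 : Type*} [NontriviallyNormedField 𝕜] [NormedSpace 𝕜 E] [SMulCommClass ℝ 𝕜 E]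
    (C : 𝕜) (hf : HasIntegrableDeriv f f' a b) :
    HasIntegrableDeriv (fun x => C • f x) (fun x => C • f' x) a b := by
  refine ⟨hf.intervalIntegrable.smul C, fun x hx => ?_⟩
  rw [intervalIntegral.integral_smul, hf.eq_add_integral x hx, smul_add]

theorem clm_comp [CompleteSpace E] [CompleteSpace F] (L : E →L[ℝ] F)
    (hf : HasIntegrableDeriv f f' a b) :
    HasIntegrableDeriv (fun x => L (f x)) (fun x => L (f' x)) a b := by
  refine ⟨intervalIntegrable_clm_comp L hf.intervalIntegrable, fun x hx => ?_⟩
  rw [L.intervalIntegral_comp_comm (hf.intervalIntegrable_of_mem hx), hf.eq_add_integral x hx,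
    map_add]

theorem absolutelyContinuousOnInterval (h : HasIntegrableDeriv f f' a b) :
    AbsolutelyContinuousOnInterval f a b := by
  have hconst : AbsolutelyContinuousOnInterval (fun _ => f a) a b :=
    (LipschitzWith.const (f a)).lipschitzOnWith.absolutelyContinuousOnInterval
  exact absolutelyContinuousOnInterval_congr
    (hconst.add (absolutelyContinuousOnInterval_intervalIntegral h.intervalIntegrable
      left_mem_uIcc)) fun x hx => (h.eq_add_integral x hx).symm

theorem continuousOn (h : HasIntegrableDeriv f f' a b) : ContinuousOn f (uIcc a b) :=
  h.absolutelyContinuousOnInterval.continuousOn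

theorem ae_hasDerivAt [CompleteSpace E] (h : HasIntegrableDeriv f f' a b) :
    ∀ᵐ x, x ∈ uIcc a b → HasDerivAt f (f' x) x := by
  have hne : ∀ c : ℝ, ∀ᵐ x : ℝ, x ≠ c := fun c => by simp [ae_iff, measure_singleton]
  filter_upwards [h.intervalIntegrable.ae_hasDerivAt_integral, hne (min a b), hne (max a b)]
    with x hx hmin hmax hxI
  refine ((hx hxI a left_mem_uIcc).const_add (f a)).congr_of_eventuallyEq ?_
  filter_upwards [Icc_mem_nhds (lt_of_le_of_ne hxI.1 hmin.symm) (lt_of_le_of_ne hxI.2 hmax)]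
    with y hy using h.eq_add_integral y hy

theorem hasDerivWithinAt [CompleteSpace E] (h : HasIntegrableDeriv f f' a b)
    (hf' : ContinuousOn f' (uIcc a b)) {x : ℝ} (hx : x ∈ uIcc a b) :
    HasDerivWithinAt f (f' x) (uIcc a b) x := by
  have : Fact (x ∈ Icc (min a b) (max a b)) := ⟨hx⟩
  have hint : HasDerivWithinAt (fun u => ∫ s in a..u, f' s) (f' x)
      (Icc (min a b) (max a b)) x :=
    intervalIntegral.integral_hasDerivWithinAt_right (h.intervalIntegrable_of_mem hx)
      (hf'.stronglyMeasurableAtFilter_nhdsWithin measurableSet_Icc x) (hf' x hx)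
  exact (hint.const_add (f a)).congr h.eq_add_integral (h.eq_add_integral x hx)

theorem of_hasDerivWithinAt [CompleteSpace E]
    (hf : ∀ x ∈ uIcc a b, HasDerivWithinAt f (f' x) (uIcc a b) x)
    (hf' : ContinuousOn f' (uIcc a b)) : HasIntegrableDeriv f f' a b := by
  refine ⟨hf'.intervalIntegrable, fun x hx => ?_⟩
  have hsub := uIcc_subset_uIcc (left_mem_uIcc (a := a) (b := b)) hx
  have hinner : ∀ y ∈ Ioo (min a x) (max a x), HasDerivWithinAt f (f' y) (Ioi y) y := fun y hy =>
    ((hf y (hsub (Ioo_subset_Icc_self hy))).mono hsub).hasDerivAt (Icc_mem_nhds hy.1 hy.2)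
      |>.hasDerivWithinAt
  rw [intervalIntegral.integral_eq_sub_of_hasDeriv_right
    (fun y hy => (hf y (hsub hy)).continuousWithinAt.mono hsub) hinner
    (hf'.mono hsub).intervalIntegrable, add_sub_cancel]

theorem mul {A : Type*} [NormedField A] [NormedAlgebra ℝ A] [CompleteSpace A] {f f' g g' : ℝ → A}
    (hf : HasIntegrableDeriv f f' a b) (hg : HasIntegrableDeriv g g' a b) :
    HasIntegrableDeriv (fun x => f x * g x) (fun x => f' x * g x + f x * g' x) a b := by
  have hint : IntervalIntegrable (fun x => f' x * g x + f x * g' x) volume a b :=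
    (hf.intervalIntegrable.mul_continuousOn hg.continuousOn).add
      (hg.intervalIntegrable.continuousOn_mul hf.continuousOn)
  refine ⟨hint, fun x hx => ?_⟩
  have hac := (hf.absolutelyContinuousOnInterval.smul hg.absolutelyContinuousOnInterval).sub
    (absolutelyContinuousOnInterval_intervalIntegral hint left_mem_uIcc)
  obtain ⟨C, hC⟩ := hac.const_of_ae_hasDerivAt_zero (by
    filter_upwards [hf.ae_hasDerivAt, hg.ae_hasDerivAt, hint.ae_hasDerivAt_integral]
      with x hfx hgx hint_x hx
    simpa using ((hfx hx).mul (hgx hx)).sub (hint_x hx a left_mem_uIcc))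
  have heq : f x * g x - (∫ s in a..x, (f' s * g s + f s * g' s)) = f a * g a := by
    simpa using (hC x hx).trans (hC a left_mem_uIcc).symm
  rw [← heq, sub_add_cancel]

theorem inner {f f' g g' : ℝ → ℂ} (hf : HasIntegrableDeriv f f' a b)
    (hg : HasIntegrableDeriv g g' a b) :
    HasIntegrableDeriv (fun x => inner ℝ (f x) (g x))
      (fun x => inner ℝ (f' x) (g x) + inner ℝ (f x) (g' x)) a b :=
  (((hf.clm_comp Complex.conjCLE.toContinuousLinearMap).mul hg).clm_comp Complex.reCLM).congr
    (fun x _ => by simp [Complex.inner, mul_comm])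
    (.of_forall fun x => by simp [Complex.inner, mul_comm])

end HasIntegrableDeriv

end AbsolutelyContinuous

section LinearODE

/-- `y` is a Carathéodory solution on `[0,1]`, with derivative `dy`, of `y'' = p y + f`. -/
structure IsSolution (p f y dy : ℝ → ℂ) : Prop where
  hasIntegrableDeriv : HasIntegrableDeriv y dy 0 1
  hasIntegrableDeriv_deriv : HasIntegrableDeriv dy (fun x => p x * y x + f x) 0 1

variable {p : ℝ → ℂ}

namespace IsSolution

variable {f g y z dy dz : ℝ → ℂ}

theorem add (hy : IsSolution p f y dy) (hz : IsSolution p g z dz) :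
    IsSolution p (f + g) (y + z) (dy + dz) :=
  ⟨hy.1.add hz.1, (hy.2.add hz.2).congr (fun _ _ => rfl) (.of_forall fun x => by
    simp only [Pi.add_apply]; ring)⟩

theorem const_smul (c : ℂ) (hy : IsSolution p f y dy) :
    IsSolution p (c • f) (c • y) (c • dy) :=
  ⟨hy.1.const_smul c, (hy.2.const_smul c).congr (fun _ _ => rfl) (.of_forall fun x => by
    simp only [Pi.smul_apply, smul_eq_mul]; ring)⟩

theorem deriv_eq_zero_of_eqOn_zero (hy : IsSolution p 0 y dy) (h : EqOn y 0 (uIcc 0 1)) :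
    dy 0 = 0 := by
  have hconst : ∀ x ∈ uIcc (0 : ℝ) 1, dy x = dy 0 := fun x hx => by
    rw [hy.2.eq_add_integral x hx, intervalIntegral.integral_congr (g := fun _ => (0 : ℂ))
      fun s hs => by simp [h (uIcc_subset_uIcc left_mem_uIcc hx hs)]]
    simp
  have hint : ∫ s in (0 : ℝ)..1, dy s = dy 0 := by
    rw [intervalIntegral.integral_congr hconst]
    simp
  rw [← hint, hy.1.integral_eq_sub, h right_mem_uIcc, h left_mem_uIcc, Pi.zero_apply, Pi.zero_apply,
    sub_self]

theorem wronskian_eq (hy : IsSolution p 0 y dy) (hz : IsSolution p 0 z dz) {x : ℝ}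
    (hx : x ∈ uIcc (0 : ℝ) 1) : y x * dz x - dy x * z x = y 0 * dz 0 - dy 0 * z 0 := by
  have hd := (hy.1.mul hz.2).add ((hy.2.mul hz.1).const_smul (-1 : ℂ))
  have h := hd.eq_add_integral x hx
  rw [intervalIntegral.integral_congr (g := fun _ => 0)
    (fun s _ => by simp only [Pi.zero_apply, smul_eq_mul]; ring)] at h
  simp only [smul_eq_mul, intervalIntegral.integral_zero] at h
  linear_combination h

theorem variation_of_constants {a b da db : ℝ → ℂ} (ha : IsSolution p 0 a da)
    (hb : IsSolution p 0 b db) (hW : a 0 * db 0 - da 0 * b 0 = 1)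
    (hf : IntervalIntegrable f volume 0 1) :
    IsSolution p f
      (fun x => b x * (∫ s in (0 : ℝ)..x, a s * f s) - a x * ∫ s in (0 : ℝ)..x, b s * f s)
      (fun x => db x * (∫ s in (0 : ℝ)..x, a s * f s) - da x * ∫ s in (0 : ℝ)..x, b s * f s) := by
  have hA : HasIntegrableDeriv (fun x => ∫ s in (0 : ℝ)..x, a s * f s) (fun s => a s * f s) 0 1 :=
    .of_integral (hf.continuousOn_mul ha.1.continuousOn)
  have hB : HasIntegrableDeriv (fun x => ∫ s in (0 : ℝ)..x, b s * f s) (fun s => b s * f s) 0 1 :=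
    .of_integral (hf.continuousOn_mul hb.1.continuousOn)
  constructor
  · refine ((hb.1.mul hA).add ((ha.1.mul hB).const_smul (-1 : ℂ))).congr (fun x _ => ?_)
      (.of_forall fun x => ?_) <;> simp only [smul_eq_mul] <;> ring
  · refine ((hb.2.mul hA).add ((ha.2.mul hB).const_smul (-1 : ℂ))).congr (fun x _ => ?_)
      ((ae_restrict_iff' measurableSet_uIoc).mpr (.of_forall fun x hx => ?_))
    · simp only [smul_eq_mul]; ring
    · have hWx := (ha.wronskian_eq hb (uIoc_subset_uIcc hx)).trans hW
      simp only [smul_eq_mul, Pi.zero_apply]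
      linear_combination -f x * hWx

end IsSolution

theorem integral_norm_le_integral_norm {E : Type*} [NormedAddCommGroup E] {f : ℝ → E} {a b x : ℝ}
    (hf : IntervalIntegrable f volume a b) (hx : x ∈ Icc a b) :
    ∫ s in a..x, ‖f s‖ ≤ ∫ s in a..b, ‖f s‖ :=
  intervalIntegral.integral_mono_interval le_rfl hx.1 hx.2
    (.of_forall fun _ => norm_nonneg _) hf.norm

theorem norm_integral_mul_le {A : Type*} [NormedRing A] [NormedSpace ℝ A] {f g : ℝ → A}
    {a b x M : ℝ} (hf : IntervalIntegrable f volume a b) (hx : x ∈ Icc a b) (hM : 0 ≤ M)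
    (hg : ∀ s ∈ Icc a x, ‖g s‖ ≤ M) :
    ‖∫ s in a..x, f s * g s‖ ≤ (∫ s in a..b, ‖f s‖) * M := by
  have hfx : IntervalIntegrable f volume a x :=
    hf.mono_set (uIcc_subset_uIcc left_mem_uIcc (Icc_subset_uIcc hx))
  calc ‖∫ s in a..x, f s * g s‖ ≤ ∫ s in a..x, ‖f s‖ * M := by
        refine intervalIntegral.norm_integral_le_of_norm_le hx.1 (.of_forall fun s hs => ?_)
          (hfx.norm.mul_const M)
        refine (norm_mul_le _ _).trans ?_
        gcongr
        exact hg s (Ioc_subset_Icc_self hs)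
    _ = (∫ s in a..x, ‖f s‖) * M := intervalIntegral.integral_mul_const _ _
    _ ≤ (∫ s in a..b, ‖f s‖) * M := by
        gcongr
        exact integral_norm_le_integral_norm hf hx

theorem norm_integral_integral_mul_le {v : ℝ → ℂ} (hp : IntervalIntegrable p volume 0 1)
    {K N : ℝ} (hK : 0 < K) (hN : 0 ≤ N) (hv : ∀ s ∈ Icc (0 : ℝ) 1, ‖v s‖ ≤ N * Real.exp (K * s))
    {x : ℝ} (hx : x ∈ Icc (0 : ℝ) 1) :
    ‖∫ r in (0 : ℝ)..x, ∫ s in (0 : ℝ)..r, p s * v s‖ ≤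
      (∫ s in (0 : ℝ)..1, ‖p s‖) / K * N * Real.exp (K * x) := by
  set P := ∫ s in (0 : ℝ)..1, ‖p s‖
  have hP : 0 ≤ P := intervalIntegral.integral_nonneg zero_le_one fun _ _ => norm_nonneg _
  have hinner : ∀ r ∈ Icc (0 : ℝ) x, ‖∫ s in (0 : ℝ)..r, p s * v s‖ ≤ P * (N * Real.exp (K * r)) :=
    fun r hr => norm_integral_mul_le hp ⟨hr.1, hr.2.trans hx.2⟩ (by positivity) fun s hs =>
      (hv s ⟨hs.1, hs.2.trans (hr.2.trans hx.2)⟩).trans (by gcongr; exact hs.2)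
  have hexp : ∫ r in (0 : ℝ)..x, Real.exp (K * r) = (Real.exp (K * x) - 1) / K := by
    rw [intervalIntegral.integral_comp_mul_left (fun r => Real.exp r) hK.ne', integral_exp]
    simp [div_eq_inv_mul]
  calc _ ≤ ∫ r in (0 : ℝ)..x, P * (N * Real.exp (K * r)) :=
        intervalIntegral.norm_integral_le_of_norm_le hx.1
          (.of_forall fun r hr => hinner r (Ioc_subset_Icc_self hr))
          (Continuous.intervalIntegrable (by fun_prop) _ _)
    _ = P / K * N * (Real.exp (K * x) - 1) := by
        simp only [intervalIntegral.integral_const_mul, hexp]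
        ring
    _ ≤ P / K * N * Real.exp (K * x) := by gcongr; linarith

noncomputable section Volterra

/-- The function `x ↦ exp (K x) * u x`, extended continuously from `[0,1]` to `ℝ`. -/
def expWeighted (K : ℝ) (u : C(Icc (0 : ℝ) 1, ℂ)) (x : ℝ) : ℂ :=
  Real.exp (K * x) • IccExtend zero_le_one u x

theorem continuous_expWeighted (K : ℝ) (u : C(Icc (0 : ℝ) 1, ℂ)) : Continuous (expWeighted K u) :=
  Continuous.smul (f := fun x => Real.exp (K * x)) (by fun_prop) u.continuous.Icc_extend'

theorem expWeighted_sub (K : ℝ) (u v : C(Icc (0 : ℝ) 1, ℂ)) (x : ℝ) :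
    expWeighted K (u - v) x = expWeighted K u x - expWeighted K v x :=
  smul_sub _ _ _

theorem norm_expWeighted_le (K : ℝ) (u : C(Icc (0 : ℝ) 1, ℂ)) (x : ℝ) :
    ‖expWeighted K u x‖ ≤ ‖u‖ * Real.exp (K * x) := by
  rw [expWeighted, norm_smul, Real.norm_of_nonneg (Real.exp_nonneg _), mul_comm]
  gcongr
  exact u.norm_coe_le_norm _

theorem continuousOn_integral_integral_mul {v : ℝ → ℂ} (hp : IntervalIntegrable p volume 0 1)
    (hv : ContinuousOn v (uIcc 0 1)) :
    ContinuousOn (fun x => ∫ r in (0 : ℝ)..x, ∫ s in (0 : ℝ)..r, p s * v s) (uIcc 0 1) :=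
  HasIntegrableDeriv.continuousOn <| .of_integral <|
    ContinuousOn.intervalIntegrable <| HasIntegrableDeriv.continuousOn <|
      .of_integral (hp.mul_continuousOn hv)

/-- The map `y ↦ g + ∫∫ p y` conjugated by the weight `exp (K x)`, which makes it a contraction
for large `K`. -/
def volterraMap (hp : IntervalIntegrable p volume 0 1) (g : C(ℝ, ℂ)) (K : ℝ)
    (u : C(Icc (0 : ℝ) 1, ℂ)) : C(Icc (0 : ℝ) 1, ℂ) where
  toFun x := Real.exp (-(K * x)) •
    (g x + ∫ r in (0 : ℝ)..x, ∫ s in (0 : ℝ)..r, p s * expWeighted K u s)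
  continuous_toFun := by
    have hint := continuousOn_integral_integral_mul hp (continuous_expWeighted K u).continuousOn
    rw [uIcc_of_le zero_le_one] at hint
    exact Continuous.smul (f := fun x : Icc (0 : ℝ) 1 => Real.exp (-(K * x))) (by fun_prop)
      (Continuous.add (f := fun x : Icc (0 : ℝ) 1 => g x) (by fun_prop) hint.domRestrict)

theorem volterraMap_sub_apply (hp : IntervalIntegrable p volume 0 1) (g : C(ℝ, ℂ)) (K : ℝ)
    (u v : C(Icc (0 : ℝ) 1, ℂ)) (x : Icc (0 : ℝ) 1) :
    volterraMap hp g K u x - volterraMap hp g K v x = Real.exp (-(K * x)) •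
      ∫ r in (0 : ℝ)..x, ∫ s in (0 : ℝ)..r, p s * expWeighted K (u - v) s := by
  have hpw : ∀ w, HasIntegrableDeriv (fun r => ∫ s in (0 : ℝ)..r, p s * expWeighted K w s)
      (fun s => p s * expWeighted K w s) 0 1 := fun w =>
    .of_integral (hp.mul_continuousOn (continuous_expWeighted K w).continuousOn)
  have hx : (x : ℝ) ∈ uIcc (0 : ℝ) 1 := by simpa only [uIcc_of_le zero_le_one] using x.2
  have hint : ∀ w, IntervalIntegrable (fun r => ∫ s in (0 : ℝ)..r, p s * expWeighted K w s)
      volume 0 x := fun w =>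
    ((hpw w).continuousOn.mono (uIcc_subset_uIcc left_mem_uIcc hx)).intervalIntegrable
  have hsub : EqOn (fun r => ∫ s in (0 : ℝ)..r, p s * expWeighted K (u - v) s)
      (fun r => (∫ s in (0 : ℝ)..r, p s * expWeighted K u s) -
        ∫ s in (0 : ℝ)..r, p s * expWeighted K v s) (uIcc 0 x) := fun r hr => by
    have hr := uIcc_subset_uIcc left_mem_uIcc hx hr
    simp only [expWeighted_sub, mul_sub]
    exact intervalIntegral.integral_sub ((hpw u).intervalIntegrable_of_mem hr)
      ((hpw v).intervalIntegrable_of_mem hr)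
  rw [intervalIntegral.integral_congr hsub, intervalIntegral.integral_sub (hint u) (hint v)]
  change Real.exp (-(K * x)) • (g x + _) - Real.exp (-(K * x)) • (g x + _) = _
  rw [← smul_sub, add_sub_add_left_eq_sub]

theorem contractingWith_volterraMap (hp : IntervalIntegrable p volume 0 1) (g : C(ℝ, ℂ)) {K : ℝ}
    (hK : 0 < K) (hpK : 2 * (∫ s in (0 : ℝ)..1, ‖p s‖) ≤ K) :
    ContractingWith (1 / 2) (volterraMap hp g K) := by
  refine ⟨by norm_num, LipschitzWith.of_dist_le_mul fun u v => ?_⟩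
  rw [ContinuousMap.dist_le (by positivity)]
  intro x
  have hbound := norm_integral_integral_mul_le hp hK (norm_nonneg _)
    (fun s _ => norm_expWeighted_le K (u - v) s) x.2
  have hpK' : (∫ s in (0 : ℝ)..1, ‖p s‖) / K ≤ 1 / 2 := by rw [div_le_iff₀ hK]; linarith
  rw [dist_eq_norm, volterraMap_sub_apply, norm_smul, Real.norm_of_nonneg (Real.exp_nonneg _),
    dist_eq_norm]
  calc _ ≤ Real.exp (-(K * x)) * (1 / 2 * ‖u - v‖ * Real.exp (K * x)) := by
        gcongr
        exact hbound.trans (by gcongr)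
    _ = 1 / 2 * ‖u - v‖ * Real.exp (-(K * x) + K * x) := by rw [Real.exp_add]; ring
    _ = _ := by simp

theorem exists_eq_add_integral_integral (hp : IntervalIntegrable p volume 0 1) (g : C(ℝ, ℂ)) :
    ∃ y : ℝ → ℂ, ContinuousOn y (uIcc 0 1) ∧
      ∀ x ∈ uIcc (0 : ℝ) 1, y x = g x + ∫ r in (0 : ℝ)..x, ∫ s in (0 : ℝ)..r, p s * y s := by
  have hP : 0 ≤ ∫ s in (0 : ℝ)..1, ‖p s‖ :=
    intervalIntegral.integral_nonneg zero_le_one fun _ _ => norm_nonneg _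
  set K := 2 * (∫ s in (0 : ℝ)..1, ‖p s‖) + 1
  have hT := contractingWith_volterraMap hp g (K := K) (by positivity) (by linarith)
  set u := hT.fixedPoint
  refine ⟨expWeighted K u, (continuous_expWeighted K u).continuousOn, fun x hx => ?_⟩
  rw [uIcc_of_le zero_le_one] at hx
  have hu : u ⟨x, hx⟩ = Real.exp (-(K * x)) •
      (g x + ∫ r in (0 : ℝ)..x, ∫ s in (0 : ℝ)..r, p s * expWeighted K u s) :=
    congr($(hT.fixedPoint_isFixedPt.symm) ⟨x, hx⟩)
  rw [expWeighted, IccExtend_of_mem _ _ hx, hu, smul_smul, ← Real.exp_add, add_neg_cancel,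
    Real.exp_zero, one_smul]

theorem exists_isSolution (hp : IntervalIntegrable p volume 0 1) (a b : ℂ) :
    ∃ y dy, IsSolution p 0 y dy ∧ y 0 = a ∧ dy 0 = b := by
  obtain ⟨y, hcont, hy⟩ := exists_eq_add_integral_integral hp ⟨fun x => a + x * b, by fun_prop⟩
  set dy : ℝ → ℂ := fun x => b + ∫ s in (0 : ℝ)..x, p s * y s
  have hdy : HasIntegrableDeriv dy (fun s => p s * y s) 0 1 :=
    (HasIntegrableDeriv.of_integral (hp.mul_continuousOn hcont)).const_add b
  have hdyint : IntervalIntegrable dy volume 0 1 := hdy.continuousOn.intervalIntegrable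
  refine ⟨y, dy, ⟨⟨hdyint, fun x hx => ?_⟩, by simpa using hdy⟩, ?_, by simp [dy]⟩
  · have hpy := HasIntegrableDeriv.of_integral (hp.mul_continuousOn hcont)
    rw [hy x hx, hy 0 left_mem_uIcc, intervalIntegral.integral_add (by simp)
      (hpy.continuousOn.mono (uIcc_subset_uIcc left_mem_uIcc hx)).intervalIntegrable]
    simp [add_assoc]
  · simpa using hy 0 left_mem_uIcc

end Volterra

end LinearODE

section QuasiPeriodicProblem

/-- The equation `y'' = p y` has a nontrivial solution on `[0,1]` with Floquet multiplier `e`. -/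
def HasQPSolution (p : ℝ → ℂ) (e : ℂ) : Prop :=
  ∃ y dy, IsSolution p 0 y dy ∧ (∃ x ∈ uIcc (0 : ℝ) 1, y x ≠ 0) ∧ y 1 = e * y 0 ∧ dy 1 = e * dy 0

theorem isQPEigenvalue_iff_hasQPSolution {q : ℝ → ℝ} {t : ℝ} {lam : ℂ} :
    IsQPEigenvalue q t lam ↔ HasQPSolution (fun x => q x - lam) (Circle.exp t) := by
  rw [Circle.coe_exp, mul_comm]
  constructor
  · rintro ⟨y, g, h, hy, hder, hg, hh, hgh, heq, hy1, hg1⟩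
    rw [← uIcc_of_le zero_le_one] at hy hder hg hgh
    refine ⟨y, g, ⟨.of_hasDerivWithinAt hder hg, ?_⟩, hy, hy1, hg1⟩
    have hint : IntervalIntegrable h volume 0 1 :=
      (intervalIntegrable_iff_integrableOn_Icc_of_le zero_le_one).mpr hh
    refine HasIntegrableDeriv.congr ⟨hint, hgh⟩ (fun _ _ => rfl) ?_
    rw [uIoc_of_le zero_le_one]
    filter_upwards [ae_restrict_of_ae_restrict_of_subset Ioc_subset_Icc_self heq] with x hx
    rw [Pi.zero_apply]
    linear_combination hx
  · rintro ⟨y, g, hsol, hy, hy1, hg1⟩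
    have hder : ∀ x ∈ uIcc (0 : ℝ) 1, HasDerivWithinAt y (g x) (uIcc 0 1) x := fun x hx =>
      hsol.1.hasDerivWithinAt hsol.2.continuousOn hx
    have hint := (intervalIntegrable_iff_integrableOn_Icc_of_le zero_le_one).mp
      hsol.2.intervalIntegrable
    have hcont := hsol.2.continuousOn
    have hgh := hsol.2.eq_add_integral
    rw [uIcc_of_le zero_le_one] at hy hder hcont hgh
    exact ⟨y, g, _, hy, hder, hcont, hint, hgh,
      .of_forall fun x => by rw [Pi.zero_apply]; ring, hy1, hg1⟩

variable {p : ℝ → ℂ} {e : ℂ}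

theorem exists_isSolution_boundary (hp : IntervalIntegrable p volume 0 1)
    (h : ¬ HasQPSolution p e) : ∃ C ≥ 0, ∀ r : ℂ × ℂ, ∃ w dw, IsSolution p 0 w dw ∧
      w 1 - e * w 0 = r.1 ∧ dw 1 - e * dw 0 = r.2 ∧ ∀ x ∈ uIcc (0 : ℝ) 1, ‖w x‖ ≤ C * ‖r‖ := by
  obtain ⟨a, da, ha, ha0, hda0⟩ := exists_isSolution hp 1 0
  obtain ⟨b, db, hb, hb0, hdb0⟩ := exists_isSolution hp 0 1
  have hsol : ∀ c : ℂ × ℂ, IsSolution p 0 (c.1 • a + c.2 • b) (c.1 • da + c.2 • db) := fun c => by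
    simpa using (ha.const_smul c.1).add (hb.const_smul c.2)
  let L : ℂ × ℂ →ₗ[ℂ] ℂ × ℂ := IsLinearMap.mk' (fun c =>
    ((c.1 • a + c.2 • b) 1 - e * (c.1 • a + c.2 • b) 0,
      (c.1 • da + c.2 • db) 1 - e * (c.1 • da + c.2 • db) 0))
    ⟨fun c d => by ext <;> simp <;> ring, fun s c => by ext <;> simp <;> ring⟩
  have hinj : LinearMap.ker L = ⊥ := by
    refine LinearMap.ker_eq_bot'.mpr fun c hc => ?_
    have hzero : EqOn (c.1 • a + c.2 • b) 0 (uIcc 0 1) := fun x hx => by_contra fun hne =>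
      h ⟨_, _, hsol c, ⟨x, hx, hne⟩, sub_eq_zero.mp (Prod.ext_iff.mp hc).1,
        sub_eq_zero.mp (Prod.ext_iff.mp hc).2⟩
    refine Prod.ext ?_ ?_
    · simpa [ha0, hb0] using hzero left_mem_uIcc
    · simpa [hda0, hdb0] using (hsol c).deriv_eq_zero_of_eqOn_zero hzero
  obtain ⟨K, -, hK⟩ := L.exists_antilipschitzWith hinj
  obtain ⟨M, hM⟩ := isCompact_uIcc.exists_bound_of_continuousOn
    (ha.1.continuousOn.prodMk hb.1.continuousOn)
  have hM0 : 0 ≤ M := (norm_nonneg _).trans (hM 0 left_mem_uIcc)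
  refine ⟨2 * M * K, by positivity, fun r => ?_⟩
  obtain ⟨c, rfl⟩ := LinearMap.injective_iff_surjective.mp (LinearMap.ker_eq_bot.mp hinj) r
  refine ⟨_, _, hsol c, rfl, rfl, fun x hx => ?_⟩
  calc ‖c.1 * a x + c.2 * b x‖ ≤ ‖c.1‖ * ‖a x‖ + ‖c.2‖ * ‖b x‖ := by
        simpa only [norm_mul] using norm_add_le (c.1 * a x) (c.2 * b x)
    _ ≤ ‖c‖ * M + ‖c‖ * M := by
        gcongr
        exacts [norm_fst_le c, (norm_fst_le (a x, b x)).trans (hM x hx), norm_snd_le c,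
          (norm_snd_le (a x, b x)).trans (hM x hx)]
    _ = 2 * M * ‖c‖ := by ring
    _ ≤ 2 * M * (K * ‖L c‖) := by gcongr; exact hK.le_mul_norm (map_zero L) c
    _ = _ := by ring

theorem norm_mul_integral_sub_le {f a b : ℝ → ℂ} (hf : IntervalIntegrable f volume 0 1) {M : ℝ}
    (ha : ∀ x ∈ Icc (0 : ℝ) 1, ‖a x‖ ≤ M) (hb : ∀ x ∈ Icc (0 : ℝ) 1, ‖b x‖ ≤ M) {x : ℝ}
    (hx : x ∈ Icc (0 : ℝ) 1) {c d : ℂ} (hc : ‖c‖ ≤ M) (hd : ‖d‖ ≤ M) :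
    ‖d * (∫ s in (0 : ℝ)..x, a s * f s) - c * ∫ s in (0 : ℝ)..x, b s * f s‖ ≤
      2 * M ^ 2 * ∫ s in (0 : ℝ)..1, ‖f s‖ := by
  have hM : 0 ≤ M := (norm_nonneg c).trans hc
  have hint : ∀ u : ℝ → ℂ, (∀ x ∈ Icc (0 : ℝ) 1, ‖u x‖ ≤ M) →
      ‖∫ s in (0 : ℝ)..x, u s * f s‖ ≤ (∫ s in (0 : ℝ)..1, ‖f s‖) * M := fun u hu => by
    simpa only [mul_comm] using
      norm_integral_mul_le hf hx hM fun s hs => hu s ⟨hs.1, hs.2.trans hx.2⟩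
  calc _ ≤ ‖d‖ * ‖∫ s in (0 : ℝ)..x, a s * f s‖ + ‖c‖ * ‖∫ s in (0 : ℝ)..x, b s * f s‖ := by
        simpa only [norm_mul] using norm_sub_le (d * _) (c * _)
    _ ≤ M * ((∫ s in (0 : ℝ)..1, ‖f s‖) * M) + M * ((∫ s in (0 : ℝ)..1, ‖f s‖) * M) := by
        gcongr
        exacts [hint a ha, hint b hb]
    _ = _ := by ring

theorem exists_isSolution_inhomogeneous (hp : IntervalIntegrable p volume 0 1) :
    ∃ C ≥ 0, ∀ f, IntervalIntegrable f volume 0 1 → ∃ z dz, IsSolution p f z dz ∧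
      z 0 = 0 ∧ dz 0 = 0 ∧ ∀ x ∈ uIcc (0 : ℝ) 1,
        ‖z x‖ ≤ C * (∫ s in (0 : ℝ)..1, ‖f s‖) ∧ ‖dz x‖ ≤ C * ∫ s in (0 : ℝ)..1, ‖f s‖ := by
  obtain ⟨a, da, ha, ha0, hda0⟩ := exists_isSolution hp 1 0
  obtain ⟨b, db, hb, hb0, hdb0⟩ := exists_isSolution hp 0 1
  have hcont : ContinuousOn (fun x => ((a x, da x), (b x, db x))) (uIcc (0 : ℝ) 1) :=
    (ha.1.continuousOn.prodMk ha.2.continuousOn).prodMk (hb.1.continuousOn.prodMk hb.2.continuousOn)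
  obtain ⟨M, hM⟩ := isCompact_uIcc.exists_bound_of_continuousOn hcont
  rw [uIcc_of_le zero_le_one] at hM ⊢
  simp only [Prod.norm_mk, max_le_iff] at hM
  refine ⟨2 * M ^ 2, by positivity, fun f hf => ⟨_, _,
    ha.variation_of_constants hb (by simp [ha0, hda0, hb0, hdb0]) hf, by simp, by simp, fun x hx =>
    ⟨norm_mul_integral_sub_le hf (fun x hx => (hM x hx).1.1) (fun x hx => (hM x hx).2.1) hx
      (hM x hx).1.1 (hM x hx).2.1,
    norm_mul_integral_sub_le hf (fun x hx => (hM x hx).1.1) (fun x hx => (hM x hx).2.1) hx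
      (hM x hx).1.2 (hM x hx).2.2⟩⟩⟩

theorem exists_isSolution_quasiPeriodic (hp : IntervalIntegrable p volume 0 1)
    (h : ¬ HasQPSolution p e) : ∃ C ≥ 0, ∀ f, IntervalIntegrable f volume 0 1 →
      ∃ z dz, IsSolution p f z dz ∧ z 1 = e * z 0 ∧ dz 1 = e * dz 0 ∧
        ∀ x ∈ uIcc (0 : ℝ) 1, ‖z x‖ ≤ C * ∫ s in (0 : ℝ)..1, ‖f s‖ := by
  obtain ⟨C, hC, hinhom⟩ := exists_isSolution_inhomogeneous hp
  obtain ⟨K, hK, hhom⟩ := exists_isSolution_boundary hp h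
  refine ⟨C + K * C, by positivity, fun f hf => ?_⟩
  obtain ⟨z, dz, hz, hz0, hdz0, hzC⟩ := hinhom f hf
  obtain ⟨w, dw, hw, hw1, hdw1, hwK⟩ := hhom (-(z 1, dz 1))
  refine ⟨z + w, dz + dw, by simpa using hz.add hw, ?_, ?_, fun x hx => ?_⟩
  · simp only [Pi.add_apply, hz0, Prod.fst_neg] at hw1 ⊢
    linear_combination hw1
  · simp only [Pi.add_apply, hdz0, Prod.snd_neg] at hdw1 ⊢
    linear_combination hdw1
  · have hr : ‖-(z 1, dz 1)‖ ≤ C * ∫ s in (0 : ℝ)..1, ‖f s‖ := by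
      rw [norm_neg, Prod.norm_mk, max_le_iff]
      exact hzC 1 right_mem_uIcc
    calc ‖z x + w x‖ ≤ ‖z x‖ + ‖w x‖ := norm_add_le _ _
      _ ≤ C * (∫ s in (0 : ℝ)..1, ‖f s‖) + K * (C * ∫ s in (0 : ℝ)..1, ‖f s‖) := by
          gcongr
          exacts [(hzC x hx).1, (hwK x hx).trans (by gcongr)]
      _ = _ := by ring

end QuasiPeriodicProblem

section QuadraticForm

/-- `y` belongs to the form domain of the quasi-periodic problem with multiplier `e`; for
simplicity only continuous derivatives `dy` are allowed. -/
structure IsQPTest (e : Circle) (y dy : ℝ → ℂ) : Prop where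
  hasIntegrableDeriv : HasIntegrableDeriv y dy 0 1
  continuousOn_deriv : ContinuousOn dy (uIcc 0 1)
  quasiPeriodic : y 1 = e * y 0

/-- The (real part of the) sesquilinear form of the operator `-y'' + p y`. -/
noncomputable def schrodingerForm (p : ℝ → ℝ) (y dy z dz : ℝ → ℂ) : ℝ :=
  ∫ x in (0 : ℝ)..1, (inner ℝ (dy x) (dz x) + p x * inner ℝ (y x) (z x))

/-- The quadratic form of `-y'' + p y` is nonnegative on quasi-periodic functions. -/
def FormNonneg (p : ℝ → ℝ) (e : Circle) : Prop :=
  ∀ y dy, IsQPTest e y dy → 0 ≤ schrodingerForm p y dy y dy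

variable {p : ℝ → ℝ} {e : Circle} {y dy z dz : ℝ → ℂ}

namespace IsQPTest

theorem sub_smul (hy : IsQPTest e y dy) (hz : IsQPTest e z dz) (c : ℝ) :
    IsQPTest e (y - c • z) (dy - c • dz) := by
  refine ⟨?_, hy.2.sub (hz.2.const_smul c), ?_⟩
  · refine (hy.1.add (hz.1.const_smul (-c))).congr (fun x _ => ?_) (.of_forall fun x => ?_) <;>
      simp [sub_eq_add_neg]
  · simp only [Pi.sub_apply, Pi.smul_apply, hy.3, hz.3, Complex.real_smul]
    ring

theorem intervalIntegrable_form (hp : IntervalIntegrable p volume 0 1) (hy : IsQPTest e y dy)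
    (hz : IsQPTest e z dz) :
    IntervalIntegrable (fun x => inner ℝ (dy x) (dz x) + p x * inner ℝ (y x) (z x)) volume 0 1 :=
  (hy.2.inner hz.2).intervalIntegrable.add
    (hp.mul_continuousOn (hy.1.continuousOn.inner hz.1.continuousOn))

end IsQPTest

theorem schrodingerForm_sub_smul (hp : IntervalIntegrable p volume 0 1) (hy : IsQPTest e y dy)
    (hz : IsQPTest e z dz) (c : ℝ) :
    schrodingerForm p (y - c • z) (dy - c • dz) (y - c • z) (dy - c • dz) =
      schrodingerForm p y dy y dy - 2 * c * schrodingerForm p y dy z dz +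
        c ^ 2 * schrodingerForm p z dz z dz := by
  have hyy := hy.intervalIntegrable_form hp hy
  have hyz := hy.intervalIntegrable_form hp hz
  have hzz := hz.intervalIntegrable_form hp hz
  simp only [schrodingerForm]
  rw [← intervalIntegral.integral_const_mul, ← intervalIntegral.integral_const_mul,
    ← intervalIntegral.integral_sub hyy (hyz.const_mul _),
    ← intervalIntegral.integral_add (hyy.sub (hyz.const_mul _)) (hzz.const_mul _)]
  congr 1 with x
  simp only [Pi.sub_apply, Pi.smul_apply, inner_sub_left, inner_sub_right,
    real_inner_smul_right, real_inner_comm]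
  ring

theorem schrodingerForm_potential_sub (hp : IntervalIntegrable p volume 0 1)
    (hy : IsQPTest e y dy) (c : ℝ) :
    schrodingerForm (fun x => p x - c) y dy y dy =
      schrodingerForm p y dy y dy - c * ∫ x in (0 : ℝ)..1, ‖y x‖ ^ 2 := by
  have hsq : IntervalIntegrable (fun x => ‖y x‖ ^ 2) volume 0 1 :=
    (hy.1.continuousOn.norm.pow 2).intervalIntegrable
  simp only [schrodingerForm]
  rw [← intervalIntegral.integral_const_mul,
    ← intervalIntegral.integral_sub (hy.intervalIntegrable_form hp hy) (hsq.const_mul c)]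
  congr 1 with x
  simp only [real_inner_self_eq_norm_sq]
  ring

theorem integral_norm_sq_nonneg (y : ℝ → ℂ) : 0 ≤ ∫ x in (0 : ℝ)..1, ‖y x‖ ^ 2 :=
  intervalIntegral.integral_nonneg zero_le_one fun _ _ => sq_nonneg _

theorem FormNonneg.mono {lam mu : ℝ} (hp : IntervalIntegrable p volume 0 1)
    (h : FormNonneg (fun x => p x - mu) e) (hle : lam ≤ mu) :
    FormNonneg (fun x => p x - lam) e := fun y dy hy => by
  have hmu := h y dy hy
  rw [schrodingerForm_potential_sub hp hy] at hmu ⊢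
  nlinarith [integral_norm_sq_nonneg y]

theorem intervalIntegrable_inner {a b : ℝ} {f : ℝ → ℂ} (hy : ContinuousOn y (uIcc a b))
    (hf : IntervalIntegrable f volume a b) :
    IntervalIntegrable (fun x => inner ℝ (y x) (f x)) volume a b :=
  intervalIntegrable_clm_comp Complex.reCLM
    (hf.mul_continuousOn (g := fun x => star (y x)) hy.star)

theorem schrodingerForm_eq_neg_integral_inner {f : ℝ → ℂ} (hy : IsQPTest e y dy)
    (hz : IsSolution (fun x => p x) f z dz) (hf : IntervalIntegrable f volume 0 1)
    (hdz1 : dz 1 = e * dz 0) :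
    schrodingerForm p y dy z dz = -∫ x in (0 : ℝ)..1, inner ℝ (y x) (f x) := by
  have hparts := hy.1.inner hz.2
  have hboundary : inner ℝ (y 1) (dz 1) = inner ℝ (y 0) (dz 0) := by
    rw [hy.3, hdz1]
    exact LinearIsometryEquiv.inner_map_map (rotation e) _ _
  have hyf := intervalIntegrable_inner hy.1.continuousOn hf
  calc schrodingerForm p y dy z dz
      = ∫ x in (0 : ℝ)..1, ((inner ℝ (dy x) (dz x) + inner ℝ (y x) (p x * z x + f x)) -
          inner ℝ (y x) (f x)) := by
        refine intervalIntegral.integral_congr fun x _ => ?_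
        simp only [inner_add_right, ← Complex.real_smul, real_inner_smul_right]
        ring
    _ = -∫ x in (0 : ℝ)..1, inner ℝ (y x) (f x) := by
        rw [intervalIntegral.integral_sub hparts.intervalIntegrable hyf, hparts.integral_eq_sub,
          hboundary, sub_self, zero_sub]

theorem sq_integral_le_integral_sq {f : ℝ → ℝ} (hf : ContinuousOn f (uIcc 0 1)) :
    (∫ x in (0 : ℝ)..1, f x) ^ 2 ≤ ∫ x in (0 : ℝ)..1, f x ^ 2 := by
  have hint : IntervalIntegrable f volume 0 1 := hf.intervalIntegrable
  have hsq : IntervalIntegrable (fun x => f x ^ 2) volume 0 1 := (hf.pow 2).intervalIntegrable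
  set c := ∫ x in (0 : ℝ)..1, f x with hc
  have hvar : ∫ x in (0 : ℝ)..1, (f x - c) ^ 2 = (∫ x in (0 : ℝ)..1, f x ^ 2) - c ^ 2 := by
    simp only [sub_sq]
    rw [intervalIntegral.integral_add (hsq.sub ((hint.const_mul 2).mul_const c)) (by simp),
      intervalIntegral.integral_sub hsq ((hint.const_mul 2).mul_const c),
      intervalIntegral.integral_mul_const, intervalIntegral.integral_const_mul, ← hc]
    simp
    ring
  linarith [intervalIntegral.integral_nonneg (μ := volume) zero_le_one
    fun x (_ : x ∈ Icc (0 : ℝ) 1) => sq_nonneg (f x - c)]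

theorem integral_inner_le {C : ℝ} (hC : 0 ≤ C) (hy : ContinuousOn y (uIcc 0 1))
    (hz : ContinuousOn z (uIcc 0 1))
    (hzy : ∀ x ∈ uIcc (0 : ℝ) 1, ‖z x‖ ≤ C * ∫ s in (0 : ℝ)..1, ‖y s‖) :
    ∫ x in (0 : ℝ)..1, inner ℝ (z x) (y x) ≤ C * ∫ x in (0 : ℝ)..1, ‖y x‖ ^ 2 := by
  set S := ∫ s in (0 : ℝ)..1, ‖y s‖ with hS
  have hnorm : IntervalIntegrable (fun x => ‖y x‖) volume 0 1 := hy.norm.intervalIntegrable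
  calc ∫ x in (0 : ℝ)..1, inner ℝ (z x) (y x) ≤ ∫ x in (0 : ℝ)..1, C * S * ‖y x‖ := by
        refine intervalIntegral.integral_mono_on zero_le_one
          (intervalIntegrable_inner hz hy.intervalIntegrable) (hnorm.const_mul _) fun x hx => ?_
        rw [← uIcc_of_le zero_le_one] at hx
        exact (real_inner_le_norm _ _).trans (by gcongr; exact hzy x hx)
    _ = C * S ^ 2 := by rw [intervalIntegral.integral_const_mul, ← hS]; ring
    _ ≤ _ := by gcongr; exact sq_integral_le_integral_sq hy.norm

theorem FormNonneg.exists_sub (hp : IntervalIntegrable p volume 0 1) (h : FormNonneg p e)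
    (hne : ¬ HasQPSolution (fun x => p x) e) : ∃ ε > 0, FormNonneg (fun x => p x - ε) e := by
  obtain ⟨C, hC, hsolve⟩ := exists_isSolution_quasiPeriodic (p := fun x => p x)
    (intervalIntegrable_clm_comp Complex.ofRealCLM hp) hne
  refine ⟨(C + 1)⁻¹, by positivity, fun y dy hy => ?_⟩
  have hycont := hy.1.continuousOn
  set N := ∫ x in (0 : ℝ)..1, ‖y x‖ ^ 2 with hN
  -- Test the form with `y - τ z`, where `-z'' + p z = y` and `τ = (C + 1)⁻¹`.
  obtain ⟨z, dz, hz, hz1, hdz1, hzC⟩ := hsolve (-y) hycont.neg.intervalIntegrable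
  have hztest : IsQPTest e z dz := ⟨hz.1, hz.2.continuousOn, hz1⟩
  have hcross : ∀ w dw, IsQPTest e w dw →
      schrodingerForm p w dw z dz = ∫ x in (0 : ℝ)..1, inner ℝ (w x) (y x) := fun w dw hw => by
    simp only [schrodingerForm_eq_neg_integral_inner hw hz hycont.neg.intervalIntegrable hdz1,
      Pi.neg_apply, inner_neg_right, intervalIntegral.integral_neg, neg_neg]
  have hyz : schrodingerForm p y dy z dz = N := by
    simp only [hcross y dy hy, real_inner_self_eq_norm_sq, hN]
  have hzz : schrodingerForm p z dz z dz ≤ (C + 1) * N := by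
    rw [hcross z dz hztest]
    refine (integral_inner_le hC hycont hz.1.continuousOn fun x hx => ?_).trans ?_
    · simpa using hzC x hx
    · linarith [integral_norm_sq_nonneg y]
  have htau : (C + 1)⁻¹ ^ 2 * schrodingerForm p z dz z dz ≤ (C + 1)⁻¹ * N := by
    calc _ ≤ (C + 1)⁻¹ ^ 2 * ((C + 1) * N) := by gcongr
      _ = _ := by field_simp
  have hform := h _ _ (hy.sub_smul hztest (C + 1)⁻¹)
  rw [schrodingerForm_sub_smul hp hy hztest, hyz] at hform
  rw [schrodingerForm_potential_sub hp hy, ← hN]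
  linarith

/-- The Riccati substitution: if `R' = p - m` with `R 0 = R 1`, then `(p - m) ‖y‖²` equals
`-2 R ⟨y', y⟩` up to a total derivative, and this is absorbed by `‖y'‖² + R² ‖y‖²`. -/
theorem exists_formNonneg_sub (hp : IntervalIntegrable p volume 0 1) (e : Circle) :
    ∃ lam : ℝ, FormNonneg (fun x => p x - lam) e := by
  set m := ∫ s in (0 : ℝ)..1, p s with hm
  set R : ℝ → ℝ := fun x => ∫ s in (0 : ℝ)..x, (p s - m)
  have hR : HasIntegrableDeriv R (fun s => p s - m) 0 1 := .of_integral (hp.sub (by simp))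
  have hR1 : R 1 = 0 := by
    simp only [R]
    rw [intervalIntegral.integral_sub hp (by simp), ← hm]
    simp
  obtain ⟨B, hB⟩ := isCompact_uIcc.exists_bound_of_continuousOn hR.continuousOn
  refine ⟨m - B ^ 2, fun y dy hy => ?_⟩
  have hform := hy.intervalIntegrable_form (hp.sub (intervalIntegrable_const (c := m - B ^ 2))) hy
  have htotal := hR.mul (hy.1.inner hy.1)
  have hzero := htotal.integral_eq_sub
  rw [hR1, show R 0 = 0 by simp [R]] at hzero
  have heq := intervalIntegral.integral_sub hform htotal.intervalIntegrable
  rw [hzero, zero_mul, zero_mul, sub_zero, sub_zero] at heq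
  rw [schrodingerForm, ← heq]
  refine intervalIntegral.integral_nonneg zero_le_one fun x hx => ?_
  rw [← uIcc_of_le zero_le_one] at hx
  have hRB : R x ^ 2 ≤ B ^ 2 := sq_le_sq' (abs_le.mp (hB x hx)).1 (abs_le.mp (hB x hx)).2
  have hsq : 0 ≤ inner ℝ (dy x - R x • y x) (dy x - R x • y x) := real_inner_self_nonneg
  have hyy : 0 ≤ inner ℝ (y x) (y x) := real_inner_self_nonneg
  simp only [inner_sub_left, inner_sub_right, real_inner_smul_right,
    real_inner_comm] at hsq ⊢
  nlinarith [mul_nonneg (sub_nonneg.mpr hRB) hyy]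

theorem isClosed_setOf_formNonneg_sub (hp : IntervalIntegrable p volume 0 1) (e : Circle) :
    IsClosed {lam : ℝ | FormNonneg (fun x => p x - lam) e} := by
  simp only [FormNonneg, ofPred_forall]
  refine isClosed_iInter fun y => isClosed_iInter fun dy => isClosed_iInter fun hy => ?_
  simp only [schrodingerForm_potential_sub hp hy]
  exact isClosed_le continuous_const (by fun_prop)

theorem formNonneg_sub_of_forall_lt {mu : ℝ} (hp : IntervalIntegrable p volume 0 1)
    (h : ∀ lam < mu, ¬ HasQPSolution (fun x => p x - (lam : ℂ)) e) :
    FormNonneg (fun x => p x - mu) e := by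
  obtain ⟨lam₀, hlam₀⟩ := exists_formNonneg_sub hp e
  rcases le_total mu lam₀ with hle | hle
  · exact hlam₀.mono hp hle
  set S := {lam : ℝ | FormNonneg (fun x => p x - lam) e}
  refine IsClosed.Icc_subset_of_forall_exists_gt (s := S)
    ((isClosed_setOf_formNonneg_sub hp e).inter isClosed_Icc) hlam₀
    (fun lam hlam upper hupper => ?_) (right_mem_Icc.mpr hle)
  obtain ⟨ε, hε, hlamε⟩ := FormNonneg.exists_sub (hp.sub (by simp)) hlam.1
    (by simpa using h lam hlam.2.2)
  refine ⟨min upper (lam + ε), ?_, lt_min hupper (by linarith), min_le_left _ _⟩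
  refine FormNonneg.mono (mu := lam + ε) hp ?_ (min_le_right _ _)
  simpa only [sub_sub] using hlamε

end QuadraticForm

section Vanishing

theorem hasIntegrableDeriv_circleExp (τ a b : ℝ) :
    HasIntegrableDeriv (fun x => (Circle.exp (τ * x) : ℂ))
      (fun x => Complex.I * τ * Circle.exp (τ * x)) a b := by
  refine .of_hasDerivWithinAt (fun x _ => HasDerivAt.hasDerivWithinAt ?_)
    (Continuous.continuousOn (by fun_prop))
  simp only [Circle.coe_exp]
  refine ((((hasDerivAt_id x).const_mul τ).ofReal_comp.mul_const Complex.I).cexp).congr_deriv ?_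
  simp only [id_eq, mul_one]
  ring

variable {q u u' : ℝ → ℝ} {e : Circle} {τ : ℝ}

theorem isQPTest_circleExp_mul (hτ : Circle.exp τ = e) (hu : HasIntegrableDeriv u u' 0 1)
    (hu' : ContinuousOn u' (uIcc 0 1)) (hu01 : u 1 = u 0) :
    IsQPTest e (fun x => Circle.exp (τ * x) * u x)
      (fun x => Circle.exp (τ * x) * (u' x + (u x * τ : ℝ) * Complex.I)) := by
  refine ⟨((hasIntegrableDeriv_circleExp τ 0 1).mul (hu.clm_comp Complex.ofRealCLM)).congr
    (fun _ _ => rfl) (.of_forall fun x => ?_), ?_, by simp [hu01, hτ]⟩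
  · simp only [Complex.ofRealCLM_apply, Complex.ofReal_mul]
    ring
  · have hu_cont := hu.continuousOn
    fun_prop

theorem FormNonneg.integral_sq_add_mul_sq_nonneg (h : FormNonneg (fun x => q x - τ ^ 2) e)
    (hτ : Circle.exp τ = e) (hu : HasIntegrableDeriv u u' 0 1)
    (hu' : ContinuousOn u' (uIcc 0 1)) (hu01 : u 1 = u 0) :
    0 ≤ ∫ x in (0 : ℝ)..1, (u' x ^ 2 + q x * u x ^ 2) := by
  refine (h _ _ (isQPTest_circleExp_mul hτ hu hu' hu01)).trans_eq
    (intervalIntegral.integral_congr fun x _ => ?_)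
  simp only [real_inner_self_eq_norm_sq, norm_mul, Circle.norm_coe, one_mul]
  rw [Complex.sq_norm, Complex.normSq_add_mul_I, Complex.norm_real, Real.norm_eq_abs, sq_abs]
  ring

theorem FormNonneg.integral_mul_eq_zero (h : FormNonneg (fun x => q x - τ ^ 2) e)
    (hτ : Circle.exp τ = e) (hq : IntervalIntegrable q volume 0 1)
    (hmean : ∫ x in (0 : ℝ)..1, q x = 0) (hu : HasIntegrableDeriv u u' 0 1)
    (hu' : ContinuousOn u' (uIcc 0 1)) (hu01 : u 1 = u 0) : ∫ x in (0 : ℝ)..1, q x * u x = 0 := by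
  have hqu : IntervalIntegrable (fun x => q x * u x) volume 0 1 :=
    hq.mul_continuousOn hu.continuousOn
  have hform : IntervalIntegrable (fun x => u' x ^ 2 + q x * u x ^ 2) volume 0 1 :=
    (hu'.pow 2).intervalIntegrable.add (hq.mul_continuousOn (hu.continuousOn.pow 2))
  -- Perturbing the minimizer `1` by `ε u` changes the form to first order by `2 ε ∫ q u`.
  have hquad : ∀ ε : ℝ, 0 ≤ (∫ x in (0 : ℝ)..1, (u' x ^ 2 + q x * u x ^ 2)) * (ε * ε) +
      (∫ x in (0 : ℝ)..1, q x * u x) * 2 * ε + ∫ x in (0 : ℝ)..1, q x := fun ε => by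
    refine (h.integral_sq_add_mul_sq_nonneg hτ ((hu.const_smul ε).const_add 1)
      (hu'.const_smul ε) (by simp only [hu01])).trans_eq ?_
    simp only [← intervalIntegral.integral_mul_const]
    rw [← intervalIntegral.integral_add (hform.mul_const _) ((hqu.mul_const 2).mul_const ε),
      ← intervalIntegral.integral_add
        ((hform.mul_const _).add ((hqu.mul_const 2).mul_const ε)) hq]
    congr 1 with x
    simp only [smul_eq_mul]
    ring
  have hdiscrim := discrim_le_zero hquad
  rw [discrim, hmean, mul_zero, sub_zero] at hdiscrim
  simpa using hdiscrim.antisymm (sq_nonneg _)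

theorem FormNonneg.ae_eq_zero (h : FormNonneg (fun x => q x - τ ^ 2) e)
    (hτ : Circle.exp τ = e) (hq : IntegrableOn q (Icc 0 1))
    (hmean : ∫ x in (0 : ℝ)..1, q x = 0) : ∀ᵐ x ∂volume.restrict (Icc (0 : ℝ) 1), q x = 0 := by
  rw [← restrict_Ioo_eq_restrict_Icc, ae_restrict_iff' measurableSet_Ioo]
  refine isOpen_Ioo.ae_eq_zero_of_integral_contDiff_smul_eq_zero
    (hq.mono_set Ioo_subset_Icc_self).locallyIntegrableOn fun u hu _ hsupp => ?_
  have hu_zero : ∀ x ∉ Ioo (0 : ℝ) 1, u x = 0 := fun x hx =>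
    image_eq_zero_of_notMem_tsupport fun hmem => hx (hsupp hmem)
  have hu' : ContinuousOn (deriv u) (uIcc 0 1) := (hu.continuous_deriv (by simp)).continuousOn
  have hderiv : HasIntegrableDeriv u (deriv u) 0 1 := .of_hasDerivWithinAt
    (fun x _ => (hu.differentiable (by simp) x).hasDerivAt.hasDerivWithinAt) hu'
  rw [← h.integral_mul_eq_zero hτ
      ((intervalIntegrable_iff_integrableOn_Icc_of_le zero_le_one).mpr hq) hmean hderiv hu'
      (by rw [hu_zero 0 (by simp), hu_zero 1 (by simp)]),
    intervalIntegral.integral_of_le zero_le_one, integral_Ioc_eq_integral_Ioo,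
    setIntegral_eq_integral_of_forall_compl_eq_zero fun x hx => by simp [hu_zero x hx]]
  simp only [smul_eq_mul, mul_comm]

end Vanishing

section Asymptotics

/-- The amplitude of the wave `exp (iμx)` in `y`: the pair `(y, dy)` at `x` is matched by the free
solution `waveAmplitude μ y dy x * exp (iμ·) + waveAmplitude (-μ) y dy x * exp (-iμ·)`. -/
noncomputable def waveAmplitude (μ : ℝ) (y dy : ℝ → ℂ) (x : ℝ) : ℂ :=
  (y x - Complex.I / μ * dy x) * Circle.exp (-μ * x) / 2

variable {p y dy : ℝ → ℂ} {e : ℂ} {μ S : ℝ}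

theorem waveAmplitude_mul_exp_add (μ : ℝ) (y dy : ℝ → ℂ) (x : ℝ) :
    waveAmplitude μ y dy x * Circle.exp (μ * x) +
      waveAmplitude (-μ) y dy x * Circle.exp (-μ * x) = y x := by
  have hexp : (Circle.exp (-μ * x) : ℂ) * Circle.exp (μ * x) = 1 := by
    rw [← Circle.coe_mul, ← Circle.exp_add, neg_mul, neg_add_cancel, Circle.exp_zero,
      Circle.coe_one]
  simp only [waveAmplitude, neg_neg, Complex.ofReal_neg, div_neg]
  linear_combination y x * hexp

theorem waveAmplitude_one (μ : ℝ) (hy1 : y 1 = e * y 0) (hdy1 : dy 1 = e * dy 0) :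
    waveAmplitude μ y dy 1 = e * Circle.exp (-μ) * waveAmplitude μ y dy 0 := by
  simp only [waveAmplitude, hy1, hdy1, mul_one, mul_zero, Circle.exp_zero, Circle.coe_one]
  ring

theorem IsSolution.hasIntegrableDeriv_waveAmplitude
    (hy : IsSolution (fun x => p x - (μ : ℂ) ^ 2) 0 y dy) (hμ : μ ≠ 0) :
    HasIntegrableDeriv (waveAmplitude μ y dy)
      (fun x => -(Complex.I / (2 * μ)) * (p x * (y x * Circle.exp (-μ * x)))) 0 1 := by
  have hinv : (μ : ℂ)⁻¹ * μ = 1 := inv_mul_cancel₀ (mod_cast hμ)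
  refine (((hy.1.add (hy.2.const_smul (-(Complex.I / μ)))).mul
    (hasIntegrableDeriv_circleExp (-μ) 0 1)).const_smul (1 / 2 : ℂ)).congr
    (fun x _ => ?_) (.of_forall fun x => ?_)
  · simp only [waveAmplitude, smul_eq_mul]
    ring
  · simp only [smul_eq_mul, Pi.zero_apply, Complex.ofReal_neg]
    linear_combination -(Circle.exp (-μ * x) / 2) *
      ((Complex.I * μ * y x + Complex.I ^ 2 * dy x) * hinv + dy x * Complex.I_sq)

theorem norm_waveAmplitude_sub_le (hp : IntervalIntegrable p volume 0 1) (hμ : μ ≠ 0)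
    (hy : IsSolution (fun x => p x - (μ : ℂ) ^ 2) 0 y dy) (hS : ∀ x ∈ Icc (0 : ℝ) 1, ‖y x‖ ≤ S)
    {x : ℝ} (hx : x ∈ Icc (0 : ℝ) 1) :
    ‖waveAmplitude μ y dy x - waveAmplitude μ y dy 0‖ ≤
      (∫ s in (0 : ℝ)..1, ‖p s‖) * S / (2 * |μ|) := by
  have hS0 : 0 ≤ S := (norm_nonneg _).trans (hS x hx)
  have hint := norm_integral_mul_le hp hx hS0 (g := fun s => y s * Circle.exp (-μ * s))
    fun s hs => by
      rw [norm_mul, Circle.norm_coe, mul_one]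
      exact hS s ⟨hs.1, hs.2.trans hx.2⟩
  rw [(hy.hasIntegrableDeriv_waveAmplitude hμ).eq_add_integral x (by rwa [uIcc_of_le zero_le_one]),
    add_sub_cancel_left, intervalIntegral.integral_const_mul, norm_mul]
  have hcoeff : ‖-(Complex.I / (2 * μ))‖ = 1 / (2 * |μ|) := by simp
  rw [hcoeff, one_div_mul_eq_div]
  gcongr

theorem norm_sub_wave_le (hp : IntervalIntegrable p volume 0 1) (hμ : μ ≠ 0)
    (hy : IsSolution (fun x => p x - (μ : ℂ) ^ 2) 0 y dy) (hS : ∀ x ∈ Icc (0 : ℝ) 1, ‖y x‖ ≤ S)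
    {x : ℝ} (hx : x ∈ Icc (0 : ℝ) 1) :
    ‖y x - (waveAmplitude μ y dy 0 * Circle.exp (μ * x) +
      waveAmplitude (-μ) y dy 0 * Circle.exp (-μ * x))‖ ≤ (∫ s in (0 : ℝ)..1, ‖p s‖) * S / |μ| := by
  have hpos := norm_waveAmplitude_sub_le hp hμ hy hS hx
  have hneg := norm_waveAmplitude_sub_le hp (neg_ne_zero.mpr hμ) (by simpa using hy) hS hx
  rw [abs_neg] at hneg
  calc _ = ‖(waveAmplitude μ y dy x - waveAmplitude μ y dy 0) * Circle.exp (μ * x) +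
        (waveAmplitude (-μ) y dy x - waveAmplitude (-μ) y dy 0) * Circle.exp (-μ * x)‖ := by
        rw [← waveAmplitude_mul_exp_add μ y dy x]
        congr 1
        ring
    _ ≤ _ := norm_add_le _ _
    _ ≤ (∫ s in (0 : ℝ)..1, ‖p s‖) * S / (2 * |μ|) +
        (∫ s in (0 : ℝ)..1, ‖p s‖) * S / (2 * |μ|) := by
        rw [norm_mul, norm_mul, Circle.norm_coe, Circle.norm_coe, mul_one, mul_one]
        gcongr
    _ = _ := by ring

theorem norm_le_two_mul_amplitudes (hp : IntervalIntegrable p volume 0 1) (hμ : μ ≠ 0)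
    (hlarge : 2 * (∫ s in (0 : ℝ)..1, ‖p s‖) ≤ |μ|)
    (hy : IsSolution (fun x => p x - (μ : ℂ) ^ 2) 0 y dy) {x : ℝ} (hx : x ∈ Icc (0 : ℝ) 1) :
    ‖y x‖ ≤ 2 * (‖waveAmplitude μ y dy 0‖ + ‖waveAmplitude (-μ) y dy 0‖) := by
  have hcont := hy.1.continuousOn.norm
  rw [uIcc_of_le zero_le_one] at hcont
  obtain ⟨z, hz, hmax⟩ := isCompact_Icc.exists_isMaxOn ⟨x, hx⟩ hcont
  have hwave := norm_sub_wave_le hp hμ hy (fun _ hs => hmax hs) hz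
  have habsorb : (∫ s in (0 : ℝ)..1, ‖p s‖) * ‖y z‖ / |μ| ≤ ‖y z‖ / 2 := by
    rw [div_le_iff₀ (abs_pos.mpr hμ)]
    nlinarith [norm_nonneg (y z)]
  have htri := norm_le_norm_sub_add (y z) (waveAmplitude μ y dy 0 * Circle.exp (μ * z) +
    waveAmplitude (-μ) y dy 0 * Circle.exp (-μ * z))
  have hsum := norm_add_le (waveAmplitude μ y dy 0 * Circle.exp (μ * z))
    (waveAmplitude (-μ) y dy 0 * Circle.exp (-μ * z) : ℂ)
  rw [norm_mul, norm_mul, Circle.norm_coe, Circle.norm_coe, mul_one, mul_one] at hsum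
  have hxz : ‖y x‖ ≤ ‖y z‖ := hmax hx
  linarith

theorem integral_mul_mul_exp_eq (hμ : μ ≠ 0)
    (hy : IsSolution (fun x => p x - (μ : ℂ) ^ 2) 0 y dy) (hy1 : y 1 = e * y 0)
    (hdy1 : dy 1 = e * dy 0) :
    ∫ s in (0 : ℝ)..1, p s * (y s * Circle.exp (-μ * s)) =
      2 * μ * Complex.I * ((e * Circle.exp (-μ) - 1) * waveAmplitude μ y dy 0) := by
  have hμ' : (μ : ℂ) ≠ 0 := mod_cast hμ
  have h := (hy.hasIntegrableDeriv_waveAmplitude hμ).integral_eq_sub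
  rw [waveAmplitude_one μ hy1 hdy1, intervalIntegral.integral_const_mul] at h
  rw [sub_one_mul, ← h]
  field_simp
  simp

theorem norm_waveAmplitude_le_of_ne (hp : IntervalIntegrable p volume 0 1) (hμ : μ ≠ 0)
    (hy : IsSolution (fun x => p x - (μ : ℂ) ^ 2) 0 y dy) (hS : ∀ x ∈ Icc (0 : ℝ) 1, ‖y x‖ ≤ S)
    (hy1 : y 1 = e * y 0) (hdy1 : dy 1 = e * dy 0) (hne : e * Circle.exp (-μ) ≠ 1) :
    ‖waveAmplitude μ y dy 0‖ ≤
      (∫ s in (0 : ℝ)..1, ‖p s‖) * S / (2 * |μ|) * (1 / ‖e * Circle.exp (-μ) - 1‖) := by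
  have hpos : 0 < ‖e * Circle.exp (-μ) - 1‖ := norm_pos_iff.mpr (sub_ne_zero.mpr hne)
  have h := norm_waveAmplitude_sub_le hp hμ hy hS (right_mem_Icc.mpr zero_le_one)
  rw [waveAmplitude_one μ hy1 hdy1, ← sub_one_mul, norm_mul] at h
  rw [mul_one_div, le_div_iff₀ hpos]
  linarith

theorem integral_mul_sub_wave_mul_exp (hp : IntervalIntegrable p volume 0 1)
    (hy : ContinuousOn y (uIcc 0 1)) (a b : ℂ) (μ : ℝ) :
    ∫ s in (0 : ℝ)..1, p s * ((y s - (a * Circle.exp (μ * s) + b * Circle.exp (-μ * s))) *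
        Circle.exp (-μ * s)) =
      (∫ s in (0 : ℝ)..1, p s * (y s * Circle.exp (-μ * s))) -
        (a * (∫ s in (0 : ℝ)..1, p s) + b * ∫ s in (0 : ℝ)..1, p s * Circle.exp (-2 * μ * s)) := by
  have hpexp : IntervalIntegrable (fun s => p s * Circle.exp (-2 * μ * s)) volume 0 1 :=
    hp.mul_continuousOn (Continuous.continuousOn (by fun_prop))
  have hpy : IntervalIntegrable (fun s => p s * (y s * Circle.exp (-μ * s))) volume 0 1 :=
    hp.mul_continuousOn (hy.mul (Continuous.continuousOn (by fun_prop)))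
  have hexp : ∀ s, (Circle.exp (μ * s) : ℂ) * Circle.exp (-μ * s) = 1 := fun s => by
    rw [← Circle.coe_mul, ← Circle.exp_add, neg_mul, add_neg_cancel, Circle.exp_zero,
      Circle.coe_one]
  have hexp_sq : ∀ s, (Circle.exp (-μ * s) : ℂ) * Circle.exp (-μ * s) =
      Circle.exp (-2 * μ * s) := fun s => by
    rw [← Circle.coe_mul, ← Circle.exp_add, show -μ * s + -μ * s = -2 * μ * s by ring]
  rw [← intervalIntegral.integral_const_mul, ← intervalIntegral.integral_const_mul,
    ← intervalIntegral.integral_add (hp.const_mul a) (hpexp.const_mul b),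
    ← intervalIntegral.integral_sub hpy ((hp.const_mul a).add (hpexp.const_mul b))]
  congr 1 with s
  linear_combination -(p s * a) * hexp s - p s * b * hexp_sq s

theorem norm_waveAmplitude_mul_integral_le_of_eq (hp : IntervalIntegrable p volume 0 1)
    (hμ : μ ≠ 0) (hy : IsSolution (fun x => p x - (μ : ℂ) ^ 2) 0 y dy)
    (hS : ∀ x ∈ Icc (0 : ℝ) 1, ‖y x‖ ≤ S) (hy1 : y 1 = e * y 0) (hdy1 : dy 1 = e * dy 0)
    (hres : e * Circle.exp (-μ) = 1) :
    ‖waveAmplitude μ y dy 0‖ * ‖∫ s in (0 : ℝ)..1, p s‖ ≤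
      ‖waveAmplitude (-μ) y dy 0‖ * ‖∫ s in (0 : ℝ)..1, p s * Circle.exp (-2 * μ * s)‖ +
        (∫ s in (0 : ℝ)..1, ‖p s‖) ^ 2 * S / |μ| := by
  have hS0 : 0 ≤ S := (norm_nonneg _).trans (hS 0 (by simp))
  have hκ : 0 ≤ ∫ s in (0 : ℝ)..1, ‖p s‖ :=
    intervalIntegral.integral_nonneg zero_le_one fun _ _ => norm_nonneg _
  have hremainder := norm_integral_mul_le hp (right_mem_Icc.mpr zero_le_one)
    (M := (∫ s in (0 : ℝ)..1, ‖p s‖) * S / |μ|)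
    (g := fun s => (y s - (waveAmplitude μ y dy 0 * Circle.exp (μ * s) +
      waveAmplitude (-μ) y dy 0 * Circle.exp (-μ * s))) * Circle.exp (-μ * s))
    (by positivity) fun s hs => by
      rw [norm_mul, Circle.norm_coe, mul_one]
      exact norm_sub_wave_le hp hμ hy hS hs
  rw [integral_mul_sub_wave_mul_exp hp hy.1.continuousOn, integral_mul_mul_exp_eq hμ hy hy1 hdy1,
    hres, sub_self, zero_mul, mul_zero, zero_sub, norm_neg] at hremainder
  have htri := norm_sub_le_norm_add (waveAmplitude μ y dy 0 * ∫ s in (0 : ℝ)..1, p s)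
    (waveAmplitude (-μ) y dy 0 * ∫ s in (0 : ℝ)..1, p s * Circle.exp (-2 * μ * s))
  rw [norm_mul, norm_mul] at htri
  rw [sq, mul_assoc, mul_div_assoc]
  linarith

theorem norm_waveAmplitude_mul_integral_le (hp : IntervalIntegrable p volume 0 1) (hμ : μ ≠ 0)
    (hlarge : 2 * (∫ s in (0 : ℝ)..1, ‖p s‖) ≤ |μ|)
    (hy : IsSolution (fun x => p x - (μ : ℂ) ^ 2) 0 y dy) (hy1 : y 1 = e * y 0)
    (hdy1 : dy 1 = e * dy 0) :
    ‖waveAmplitude μ y dy 0‖ * ‖∫ s in (0 : ℝ)..1, p s‖ ≤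
      (‖waveAmplitude μ y dy 0‖ + ‖waveAmplitude (-μ) y dy 0‖) *
        (‖∫ s in (0 : ℝ)..1, p s * Circle.exp (-2 * μ * s)‖ +
          2 * (∫ s in (0 : ℝ)..1, ‖p s‖) ^ 2 * (1 + 1 / ‖e * Circle.exp (-μ) - 1‖) / |μ|) := by
  have hy2N := fun x hx => norm_le_two_mul_amplitudes hp hμ hlarge hy (x := x) hx
  have : 0 < |μ| := abs_pos.mpr hμ
  set κ := ∫ s in (0 : ℝ)..1, ‖p s‖
  have : 0 ≤ κ := intervalIntegral.integral_nonneg zero_le_one fun _ _ => norm_nonneg _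
  set N := ‖waveAmplitude μ y dy 0‖ + ‖waveAmplitude (-μ) y dy 0‖
  have : 0 ≤ N := by positivity
  by_cases hres : e * Circle.exp (-μ) = 1
  · have hbound := norm_waveAmplitude_mul_integral_le_of_eq hp hμ hy hy2N hy1 hdy1 hres
    have hb : ‖waveAmplitude (-μ) y dy 0‖ ≤ N := le_add_of_nonneg_left (norm_nonneg _)
    rw [hres, sub_self, norm_zero, div_zero, add_zero, mul_one]
    calc _ ≤ N * ‖∫ s in (0 : ℝ)..1, p s * Circle.exp (-2 * μ * s)‖ + κ ^ 2 * (2 * N) / |μ| :=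
          hbound.trans (by gcongr)
      _ = _ := by ring
  · have ha := norm_waveAmplitude_le_of_ne hp hμ hy hy2N hy1 hdy1 hres
    have hmean : ‖∫ s in (0 : ℝ)..1, p s‖ ≤ κ :=
      intervalIntegral.norm_integral_le_integral_norm zero_le_one
    set d := 1 / ‖e * Circle.exp (-μ) - 1‖
    have : 0 ≤ d := by positivity
    calc _ ≤ κ * (2 * N) / (2 * |μ|) * d * κ := by gcongr
      _ = N * (κ ^ 2 * d / |μ|) := by ring
      _ ≤ N * (2 * κ ^ 2 * (1 + d) / |μ|) := by
          gcongr <;> linarith [sq_nonneg κ]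
      _ ≤ _ := by
          gcongr
          exact le_add_of_nonneg_left (norm_nonneg _)

theorem norm_integral_le_of_hasQPSolution (hp : IntervalIntegrable p volume 0 1) (hμ : μ ≠ 0)
    (hlarge : 2 * (∫ s in (0 : ℝ)..1, ‖p s‖) ≤ |μ|)
    (h : HasQPSolution (fun x => p x - (μ : ℂ) ^ 2) e) :
    ‖∫ s in (0 : ℝ)..1, p s‖ ≤
      (‖∫ s in (0 : ℝ)..1, p s * Circle.exp (-2 * μ * s)‖ +
          2 * (∫ s in (0 : ℝ)..1, ‖p s‖) ^ 2 * (1 + 1 / ‖e * Circle.exp (-μ) - 1‖) / |μ|) +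
        (‖∫ s in (0 : ℝ)..1, p s * Circle.exp (2 * μ * s)‖ +
          2 * (∫ s in (0 : ℝ)..1, ‖p s‖) ^ 2 * (1 + 1 / ‖e * Circle.exp μ - 1‖) / |μ|) := by
  obtain ⟨y, dy, hy, ⟨x, hx, hyx⟩, hy1, hdy1⟩ := h
  rw [uIcc_of_le zero_le_one] at hx
  have hpos : 0 < ‖waveAmplitude μ y dy 0‖ + ‖waveAmplitude (-μ) y dy 0‖ := by
    have hbound := norm_le_two_mul_amplitudes hp hμ hlarge hy hx
    linarith [norm_pos_iff.mpr hyx]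
  have hplus := norm_waveAmplitude_mul_integral_le hp hμ hlarge hy hy1 hdy1
  have hminus := norm_waveAmplitude_mul_integral_le hp (neg_ne_zero.mpr hμ)
    (by rwa [abs_neg]) (by simpa using hy) hy1 hdy1
  rw [neg_neg, abs_neg, neg_mul_neg, add_comm ‖waveAmplitude (-μ) y dy 0‖] at hminus
  refine le_of_mul_le_mul_left ?_ hpos
  rw [add_mul, mul_add _ (_ + _) (_ + _)]
  exact add_le_add hplus hminus

theorem tendsto_integral_mul_circleExp (p : ℝ → ℂ) {c : ℝ} (hc : c ≠ 0) :
    Filter.Tendsto (fun μ : ℝ => ∫ s in (0 : ℝ)..1, p s * Circle.exp (c * μ * s))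
      (Filter.cocompact ℝ) (nhds 0) := by
  have hscale : Filter.Tendsto (fun μ : ℝ => -(c / (2 * Real.pi)) * μ) (Filter.cocompact ℝ)
      (Filter.cocompact ℝ) :=
    (Homeomorph.mulLeft₀ (-(c / (2 * Real.pi)))
      (neg_ne_zero.mpr (div_ne_zero hc Real.two_pi_pos.ne'))).isClosedEmbedding.tendsto_cocompact
  refine ((Real.tendsto_integral_exp_smul_cocompact (indicator (Ioc 0 1) p)).comp hscale).congr
    fun μ => ?_
  rw [intervalIntegral.integral_of_le zero_le_one, ← integral_indicator measurableSet_Ioc]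
  refine integral_congr_ae (.of_forall fun s => ?_)
  simp only [indicator]
  split_ifs
  · rw [Circle.smul_def, smul_eq_mul, mul_comm, Real.fourierChar_apply, Circle.coe_exp]
    congr 2
    push_cast
    field_simp
  · simp

theorem integral_eq_zero_of_frequently_hasQPSolution {e : Circle}
    (hp : IntervalIntegrable p volume 0 1)
    (h : ∃ᶠ μ in Filter.cocompact ℝ, Circle.exp μ = e ∧
      HasQPSolution (fun x => p x - (μ : ℂ) ^ 2) e) : ∫ s in (0 : ℝ)..1, p s = 0 := by
  have habs : Filter.Tendsto (fun μ : ℝ => |μ|) (Filter.cocompact ℝ) Filter.atTop :=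
    tendsto_norm_cocompact_atTop
  have hlim := fun (c : ℝ) (hc : c ≠ 0) (C : ℝ) =>
    (tendsto_integral_mul_circleExp p hc).norm.add (habs.const_div_atTop C)
  have hlim' := (hlim (-2) (by norm_num) (2 * (∫ s in (0 : ℝ)..1, ‖p s‖) ^ 2 *
    (1 + 1 / ‖(e * e⁻¹ - 1 : ℂ)‖))).add (hlim 2 two_ne_zero (2 * (∫ s in (0 : ℝ)..1, ‖p s‖) ^ 2 *
      (1 + 1 / ‖(e * e - 1 : ℂ)‖)))
  simp only [norm_zero, add_zero] at hlim'
  refine norm_le_zero_iff.mp (ge_of_tendsto_of_frequently hlim' ?_)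
  refine (h.and_eventually ((habs.eventually_gt_atTop 0).and (habs.eventually_ge_atTop
    (2 * ∫ s in (0 : ℝ)..1, ‖p s‖)))).mono ?_
  rintro μ ⟨⟨rfl, hsol⟩, hμ, hlarge⟩
  simpa only [Circle.exp_neg, Circle.coe_inv] using
    norm_integral_le_of_hasQPSolution hp (abs_pos.mp hμ) hlarge hsol

end Asymptotics

theorem exists_circleExp_eq_and_sq_eq_min (t : ℝ) : ∃ τ : ℝ, Circle.exp τ = Circle.exp t ∧
    τ ^ 2 = min (t ^ 2) ((2 * Real.pi - t) ^ 2) := by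
  rcases min_choice (t ^ 2) ((2 * Real.pi - t) ^ 2) with h | h
  · exact ⟨t, rfl, h.symm⟩
  · exact ⟨t - 2 * Real.pi, Circle.exp_sub_two_pi t, by rw [h]; ring⟩

theorem exists_circleExp_eq_and_sq_eq {t m : ℝ} {n : ℕ}
    (hm : m = 2 * n * Real.pi - t ∨ m = 2 * n * Real.pi + t) :
    ∃ μ : ℝ, Circle.exp μ = Circle.exp t ∧ μ ^ 2 = m ^ 2 ∧ n - |t| ≤ |μ| := by
  have hlarge : n - |t| ≤ |m| := by
    have hn : (n : ℝ) ≤ 2 * n * Real.pi := by nlinarith [Real.pi_gt_three, n.cast_nonneg (α := ℝ)]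
    rcases hm with rfl | rfl <;> refine le_trans ?_ (le_abs_self _) <;>
      linarith [le_abs_self t, neg_abs_le t]
  rcases hm with rfl | rfl
  · refine ⟨-(2 * n * Real.pi - t), Circle.exp_eq_exp.mpr ⟨-n, ?_⟩, neg_sq _, by rwa [abs_neg]⟩
    push_cast
    ring
  · refine ⟨2 * n * Real.pi + t, Circle.exp_eq_exp.mpr ⟨n, ?_⟩, rfl, hlarge⟩
    push_cast
    ring

theorem frequently_cocompact_circleExp_eq {t : ℝ} {m : ℕ → ℝ} {P : ℝ → Prop}
    (hm : ∀ n : ℕ, 1 ≤ n →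
      (m n = 2 * n * Real.pi - t ∨ m n = 2 * n * Real.pi + t) ∧ P (m n ^ 2)) :
    ∃ᶠ μ in Filter.cocompact ℝ, Circle.exp μ = Circle.exp t ∧ P (μ ^ 2) := by
  rw [← Metric.cobounded_eq_cocompact, Filter.hasBasis_cobounded_norm.frequently_iff]
  intro r _
  obtain ⟨n, hn⟩ := exists_nat_ge (r + |t|)
  obtain ⟨hmn, hP⟩ := hm (n + 1) (Nat.le_add_left 1 n)
  obtain ⟨μ, hμ, hsq, hlarge⟩ := exists_circleExp_eq_and_sq_eq hmn
  push_cast at hlarge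
  exact ⟨μ, le_trans (by linarith) hlarge, hμ, hsq ▸ hP⟩

theorem ambarzumyan_quasiPeriodic_mixed_general {q : ℝ → ℝ} (hq : IntegrableOn q (Icc (0 : ℝ) 1))
    {t τ : ℝ} (hτ : Circle.exp τ = Circle.exp t)
    (hlow : ∀ r : ℝ, IsQPEigenvalue q t r → τ ^ 2 ≤ r)
    (hfreq : ∃ᶠ μ in Filter.cocompact ℝ,
      Circle.exp μ = Circle.exp t ∧ IsQPEigenvalue q t ((μ ^ 2 : ℝ) : ℂ)) :
    ∀ᵐ x ∂(volume.restrict (Icc (0 : ℝ) 1)), q x = 0 := by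
  have hqi : IntervalIntegrable q volume 0 1 :=
    (intervalIntegrable_iff_integrableOn_Icc_of_le zero_le_one).mpr hq
  have hmean : ∫ x in (0 : ℝ)..1, q x = 0 := by
    have h := integral_eq_zero_of_frequently_hasQPSolution
      (intervalIntegrable_clm_comp Complex.ofRealCLM hqi)
      (hfreq.mono fun μ hμ => ⟨hμ.1, by simpa using isQPEigenvalue_iff_hasQPSolution.mp hμ.2⟩)
    simpa [intervalIntegral.integral_ofReal] using h
  have hform : FormNonneg (fun x => q x - τ ^ 2) (Circle.exp t) :=
    formNonneg_sub_of_forall_lt hqi fun lam hlt hsol =>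
      (hlow lam (isQPEigenvalue_iff_hasQPSolution.mpr hsol)).not_gt hlt
  exact hform.ae_eq_zero hτ hq hmean

/-- Ambarzumyan-type theorem for `L_t(q)` using, for each `n ≥ 1`, an
eigenvalue `m(n)²` where `m(n)` is either `2nπ − t` or `2nπ + t`. -/
theorem ambarzumyan_quasiPeriodic_mixed
    (q : ℝ → ℝ) (hq : IntegrableOn q (Icc (0:ℝ) 1))
    (t : ℝ) (ht : t ∈ Ico (0:ℝ) (2 * Real.pi))
    (hlow : ∀ lam : ℂ, IsQPEigenvalue q t lam →
      ∃ r : ℝ, lam = (r : ℂ) ∧ min (t ^ 2) ((2 * Real.pi - t) ^ 2) ≤ r)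
    (m : ℕ → ℝ)
    (hm : ∀ n : ℕ, 1 ≤ n →
      (m n = 2 * n * Real.pi - t ∨ m n = 2 * n * Real.pi + t) ∧
      IsQPEigenvalue q t (((m n) ^ 2 : ℝ) : ℂ)) :
    ∀ᵐ x ∂(volume.restrict (Icc (0:ℝ) 1)), q x = 0 := by
  obtain ⟨τ, hτ, hmin⟩ := exists_circleExp_eq_and_sq_eq_min t
  refine ambarzumyan_quasiPeriodic_mixed_general hq hτ (fun lam hlam => ?_)
    (frequently_cocompact_circleExp_eq (P := fun r => IsQPEigenvalue q t r) hm)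
  obtain ⟨r, hr, hle⟩ := hlow lam hlam
  rwa [hmin, Complex.ofReal_inj.mp hr]
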